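/- Consider the periodic checkerboard potential: assume additionally 1/(2ε) ∈ ℕ and V(x) = α whenever ⌊x_i/ε⌋ is even for every i = 1, …, d, and V(x) = β otherwise, and set N := (2ε)^{-d}. Assume moreover α ≤ c_α ε^{-2}. There exist constants C (depending only on d and c_α) and c' (depending only on d) such that for all integers ℓ > k ≥ 1 with β ≥ c' (ℓ−1)² ε^{-2}, the min-max values satisfy the spectral-gap estimate μ_{N k} / μ_{N ℓ^d + 1} ≤ C k²/(ℓ−1)²; in particular μ_1/μ_{N ℓ^d + 1} ≤ C (ℓ−1)^{-2}. (Corollary 5.4 of the paper: in the periodic case, spectral gaps occur only after O(ε^{-d}) eigenvalues.) -/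

import Mathlib

open MeasureTheory Real
open scoped BigOperators RealInnerProductSpace

noncomputable section

/-- A function on `ℝ^d` is periodic if it is `ℤ^d`-periodic. -/
def ZPeriodic {d : ℕ} (f : (Fin d → ℝ) → ℝ) : Prop :=
  ∀ (x : Fin d → ℝ) (k : Fin d → ℤ), f (x + fun i => (k i : ℝ)) = f x

/-- The unit cell `[0,1)^d`. -/
def unitCell (d : ℕ) : Set (Fin d → ℝ) := Set.univ.pi fun _ => Set.Ico (0 : ℝ) 1

/-- Squared Euclidean norm `|∇f(x)|²` of the (a.e. defined) gradient of `f`. -/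
def gradSq {d : ℕ} (f : (Fin d → ℝ) → ℝ) (x : Fin d → ℝ) : ℝ :=
  ∑ i, (fderiv ℝ f x (Pi.single i 1)) ^ 2

/-- `‖v‖²`, the squared `L²` norm over the unit cell. -/
def l2sq {d : ℕ} (v : (Fin d → ℝ) → ℝ) : ℝ := ∫ x in unitCell d, (v x) ^ 2

/-- `‖∇v‖²_{L²([0,1)^d)}`. -/
def gradL2sq {d : ℕ} (v : (Fin d → ℝ) → ℝ) : ℝ := ∫ x in unitCell d, gradSq v x

/-- `|||v|||²`, the squared energy norm over the unit cell. -/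
def energySq {d : ℕ} (V v : (Fin d → ℝ) → ℝ) : ℝ :=
  ∫ x in unitCell d, (gradSq v x + V x * (v x) ^ 2)

/-- The open grid cell of side `ε` with lower-left corner `ε q`. -/
def gridCell {d : ℕ} (ε : ℝ) (q : Fin d → ℤ) : Set (Fin d → ℝ) :=
  {x | ∀ i, (q i : ℝ) * ε < x i ∧ x i < ((q i : ℝ) + 1) * ε}

/-- `V` is a periodic two-valued potential, constant on each (open) grid cell. -/
def IsGridPotential {d : ℕ} (ε α β : ℝ) (V : (Fin d → ℝ) → ℝ) : Prop :=
  ZPeriodic V ∧ (∀ x, V x = α ∨ V x = β) ∧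
    ∀ q : Fin d → ℤ, (∀ x ∈ gridCell ε q, V x = α) ∨ (∀ x ∈ gridCell ε q, V x = β)

/-- The axis-aligned closed cube of side `ε m` which is the union of the grid cells
`q + r`, `r ∈ {0, …, m-1}^d`. -/
def gridCube {d : ℕ} (ε : ℝ) (q : Fin d → ℤ) (m : ℕ) : Set (Fin d → ℝ) :=
  {x | ∀ i, (q i : ℝ) * ε ≤ x i ∧ x i ≤ ((q i : ℝ) + (m : ℝ)) * ε}

/-- An α-cube: a closed cube, union of grid cells, contained in `closure {V = α}`. -/
def IsAlphaCube {d : ℕ} (ε α : ℝ) (V : (Fin d → ℝ) → ℝ) (q : Fin d → ℤ) (m : ℕ) : Prop :=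
  1 ≤ m ∧ gridCube ε q m ⊆ closure {x | V x = α}

/-- A maximal α-cube: an α-cube maximal under inclusion among α-cubes. -/
def IsMaxAlphaCube {d : ℕ} (ε α : ℝ) (V : (Fin d → ℝ) → ℝ) (q : Fin d → ℤ) (m : ℕ) : Prop :=
  IsAlphaCube ε α V q m ∧ ∀ q' m', IsAlphaCube ε α V q' m' →
    gridCube ε q m ⊆ gridCube ε q' m' → gridCube ε q m = gridCube ε q' m'

/-- `ε L` is the largest side length of a maximal α-cube (with `L = 1` if no α-cube exists):
the maximal width of a potential valley. -/
def IsValleyWidth {d : ℕ} (ε α : ℝ) (V : (Fin d → ℝ) → ℝ) (L : ℕ) : Prop :=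
  IsGreatest {m | ∃ q, IsMaxAlphaCube ε α V q m} L ∨
    ((∀ q m, ¬ IsAlphaCube ε α V q m) ∧ L = 1)

/-- `κ` is the maximal number of maximal α-cubes containing a common α-grid cell. -/
def IsOverlapNumber {d : ℕ} (ε α : ℝ) (V : (Fin d → ℝ) → ℝ) (κ : ℕ) : Prop :=
  IsGreatest {n | ∃ q : Fin d → ℤ, (∀ x ∈ gridCell ε q, V x = α) ∧
    n = Nat.card {p : (Fin d → ℤ) × ℕ //
      IsMaxAlphaCube ε α V p.1 p.2 ∧ gridCell ε q ⊆ gridCube ε p.1 p.2}} κ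

/-- A cut-off function `η` with constant `Cη`: periodic, `C¹`, `[0,1]`-valued, equal to `1`
on every α-cell, vanishing on the closed concentric subcube of side `ε/2` of every β-cell,
with `‖∇η‖_∞ ≤ Cη / ε`. -/
structure IsCutoff {d : ℕ} (ε Cη α β : ℝ) (V η : (Fin d → ℝ) → ℝ) : Prop where
  periodic : ZPeriodic η
  contDiff : ContDiff ℝ 1 η
  mem_Icc : ∀ x, η x ∈ Set.Icc (0 : ℝ) 1
  eq_one : ∀ q : Fin d → ℤ, (∀ x ∈ gridCell ε q, V x = α) → ∀ x ∈ gridCell ε q, η x = 1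
  eq_zero : ∀ q : Fin d → ℤ, (∀ x ∈ gridCell ε q, V x = β) → ∀ x : Fin d → ℝ,
    (∀ i, ((q i : ℝ) + 1/4) * ε ≤ x i ∧ x i ≤ ((q i : ℝ) + 3/4) * ε) → η x = 0
  grad_le : ∀ x, ‖fderiv ℝ η x‖ ≤ Cη / ε


/-- The set of periodic Lipschitz functions on `ℝ^d`. -/
def PeriodicLipschitz (d : ℕ) : Set ((Fin d → ℝ) → ℝ) :=
  {v | ZPeriodic v ∧ ∃ K : NNReal, LipschitzWith K v}

/-- The `m`-th Courant min-max value `μ_m` of the Schrödinger form: the infimum over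
`m`-dimensional subspaces `W` of the space of periodic Lipschitz functions of
`sup {|||v|||²/‖v‖² : v ∈ W, v ≠ 0}`, expressed as the infimum of all upper bounds `M`
of the Rayleigh quotient on some such subspace. -/
def minmaxVal (d : ℕ) (V : (Fin d → ℝ) → ℝ) (m : ℕ) : ℝ :=
  sInf {M : ℝ | ∃ W : Submodule ℝ ((Fin d → ℝ) → ℝ),
    (W : Set ((Fin d → ℝ) → ℝ)) ⊆ PeriodicLipschitz d ∧
    Module.finrank ℝ W = m ∧
    ∀ v ∈ W, v ≠ 0 → energySq V v ≤ M * l2sq v}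

/-!
Cut the `N = m ^ d` valleys into `N ℓ ^ d` cubes of side `ε / ℓ`. A space of dimension
`N ℓ ^ d + 1` contains a nonzero function with mean zero on each of these cubes. There its energy is
controlled from below by the Poincaré inequality with constant of order `(ε / ℓ)²`, and outside the
valleys by `β ≳ ((ℓ - 1) / ε)²`, so `μ_{N ℓ ^ d + 1} ≳ ((ℓ - 1) / ε)²`. Conversely, the `N k ^ d`
tent functions supported in the valley cubes of side `ε / k` have disjoint supports and never see
`β`, so their span shows that the first `N k ^ d` min-max values are at most of order
`(k / ε)² + α`.
-/

lemma integrableOn_of_continuous_of_isBounded {X F : Type*} [MetricSpace X] [ProperSpace X]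
    [MeasurableSpace X] [OpensMeasurableSpace X] {μ : Measure X} [IsFiniteMeasureOnCompacts μ]
    [NormedAddCommGroup F] {f : X → F} (hf : Continuous f) {Q : Set X}
    (hb : Bornology.IsBounded Q) : IntegrableOn f Q μ :=
  (hf.continuousOn.integrableOn_compact hb.isCompact_closure).mono_set subset_closure

section Poincare

lemma sq_sub_le_mul_integral_deriv_sq {K : NNReal} {g : ℝ → ℝ} (hg : LipschitzWith K g)
    {a b : ℝ} (hab : a ≤ b) :
    (g b - g a) ^ 2 ≤ (b - a) * ∫ t in a..b, deriv g t ^ 2 := by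
  rcases hab.eq_or_lt with rfl | hlt
  · simp
  have hm : Measurable (deriv g) := measurable_deriv g
  have hbound (t : ℝ) : ‖deriv g t‖ ≤ K := norm_deriv_le_of_lipschitz hg
  have hfin : volume (Set.uIoc a b) ≠ ⊤ := by simp [Set.uIoc_of_le hab]
  have hint : IntegrableOn (deriv g) (Set.uIoc a b) :=
    Measure.integrableOn_of_bounded hfin hm.aestronglyMeasurable (.of_forall hbound)
  have hint_sq : IntegrableOn (fun t => deriv g t ^ 2) (Set.uIoc a b) :=
    Measure.integrableOn_of_bounded (M := (K : ℝ) ^ 2) hfin (hm.pow_const 2).aestronglyMeasurable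
      (.of_forall fun t => by rw [norm_pow]; gcongr; exact hbound t)
  have ftc : ∫ t in a..b, deriv g t = g b - g a :=
    hg.lipschitzOnWith.absolutelyContinuousOnInterval.integral_deriv_eq_sub
  have jensen : (⨍ t in a..b, deriv g t) ^ 2 ≤ ⨍ t in a..b, deriv g t ^ 2 :=
    even_two.convexOn_pow.map_set_average_le (by fun_prop) isClosed_univ
      (by simp [Set.uIoc_of_le hab, hlt]) hfin (by simp) hint hint_sq
  rw [interval_average_eq, interval_average_eq, ftc, smul_eq_mul, smul_eq_mul, mul_pow] at jensen
  have : 0 < b - a := sub_pos.2 hlt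
  calc (g b - g a) ^ 2 = (b - a) ^ 2 * ((b - a)⁻¹ ^ 2 * (g b - g a) ^ 2) := by field_simp
    _ ≤ (b - a) ^ 2 * ((b - a)⁻¹ * ∫ t in a..b, deriv g t ^ 2) := by gcongr
    _ = (b - a) * ∫ t in a..b, deriv g t ^ 2 := by field_simp

lemma lintegral_lintegral_eq_lintegral_translate {G : Type*} [MeasurableSpace G] [AddGroup G]
    [MeasurableAdd₂ G] {μ : Measure G} [SFinite μ] [μ.IsAddLeftInvariant] {F : G → G → ENNReal}
    (hF : Measurable (Function.uncurry F)) {Q : Set G} (hQ : MeasurableSet Q) :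
    ∫⁻ x in Q, ∫⁻ y in Q, F x y ∂μ ∂μ =
      ∫⁻ z, ∫⁻ x in (· + z) ⁻¹' Q ∩ Q, F x (x + z) ∂μ ∂μ := by
  have hmeas : Measurable fun p : G × G => Q.indicator (F p.1) (p.1 + p.2) := by
    have : (fun p : G × G => Q.indicator (F p.1) (p.1 + p.2)) =
        ((fun p : G × G => p.1 + p.2) ⁻¹' Q).indicator fun p => F p.1 (p.1 + p.2) := rfl
    rw [this]
    exact (hF.comp (measurable_fst.prodMk measurable_add)).indicator (measurable_add hQ)
  calc ∫⁻ x in Q, ∫⁻ y in Q, F x y ∂μ ∂μ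
      = ∫⁻ x in Q, ∫⁻ z, Q.indicator (F x) (x + z) ∂μ ∂μ := by
        simp_rw [lintegral_add_left_eq_self, lintegral_indicator hQ]
    _ = ∫⁻ z, ∫⁻ x in Q, Q.indicator (F x) (x + z) ∂μ ∂μ :=
        lintegral_lintegral_swap hmeas.aemeasurable
    _ = ∫⁻ z, ∫⁻ x in (· + z) ⁻¹' Q ∩ Q, F x (x + z) ∂μ ∂μ := by
        congr with z
        rw [← setLIntegral_indicator (measurable_add_const z hQ)]
        rfl

variable {E : Type*} [NormedAddCommGroup E] [NormedSpace ℝ E]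

lemma sq_sub_le_integral_lineDeriv_sq {K : NNReal} {v : E → ℝ}
    (hv : LipschitzWith K v) (x z : E) :
    (v (x + z) - v x) ^ 2 ≤ ∫ t in (0 : ℝ)..1, lineDeriv ℝ v (x + t • z) z ^ 2 := by
  have hline : LipschitzWith (K * ‖z‖₊) fun t : ℝ => v (x + t • z) :=
    hv.comp <| .of_dist_le_mul fun s t => by
      rw [dist_add_left, dist_eq_norm, ← sub_smul, norm_smul, mul_comm, coe_nnnorm, Real.dist_eq,
        Real.norm_eq_abs]
  have hderiv (t : ℝ) : deriv (fun s : ℝ => v (x + s • z)) t = lineDeriv ℝ v (x + t • z) z := by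
    rw [lineDeriv, ← add_zero t, ← deriv_comp_const_add]
    simp only [add_zero, add_smul, add_assoc]
  simpa [hderiv] using sq_sub_le_mul_integral_deriv_sq hline zero_le_one

variable [MeasurableSpace E] [BorelSpace E] [FiniteDimensional ℝ E] (μ : Measure E)
  [μ.IsAddHaarMeasure]

lemma lintegral_sq_sub_translate_le {K : NNReal} {v : E → ℝ} (hv : LipschitzWith K v)
    {Q : Set E} (hQ : MeasurableSet Q) (hc : Convex ℝ Q) (z : E) :
    ∫⁻ x in (· + z) ⁻¹' Q ∩ Q, ENNReal.ofReal ((v (x + z) - v x) ^ 2) ∂μ ≤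
      ∫⁻ x in Q, ENNReal.ofReal ((‖z‖ * ‖fderiv ℝ v x‖) ^ 2) ∂μ := by
  let G : E → ENNReal := Q.indicator fun x => ENNReal.ofReal (lineDeriv ℝ v x z ^ 2)
  have hG : Measurable G :=
    ((measurable_lineDeriv hv.continuous).pow_const 2).ennreal_ofReal.indicator hQ
  have along_segment (x : E) (hx : x ∈ (· + z) ⁻¹' Q ∩ Q) :
      ENNReal.ofReal ((v (x + z) - v x) ^ 2) ≤ ∫⁻ t in Set.Ioc (0 : ℝ) 1, G (x + t • z) := by
    refine (ENNReal.ofReal_le_ofReal (sq_sub_le_integral_lineDeriv_sq hv x z)).trans ?_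
    rw [intervalIntegral.integral_of_le zero_le_one]
    refine (Real.ofReal_le_enorm _).trans <| (enorm_integral_le_lintegral_enorm _).trans <|
      setLIntegral_mono' measurableSet_Ioc fun t ht => ?_
    simp only [G]
    rw [Set.indicator_of_mem (hc.add_smul_mem hx.2 hx.1 ⟨ht.1.le, ht.2⟩),
      Real.enorm_of_nonneg (sq_nonneg _)]
  have deriv_le : ∀ᵐ x ∂μ, ENNReal.ofReal (lineDeriv ℝ v x z ^ 2) ≤
      ENNReal.ofReal ((‖z‖ * ‖fderiv ℝ v x‖) ^ 2) := by
    filter_upwards [hv.ae_differentiableAt (μ := μ)] with x hx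
    rw [hx.lineDeriv_eq_fderiv, ← sq_abs, mul_comm]
    gcongr
    exact (fderiv ℝ v x).le_opNorm z
  calc ∫⁻ x in (· + z) ⁻¹' Q ∩ Q, ENNReal.ofReal ((v (x + z) - v x) ^ 2) ∂μ
      ≤ ∫⁻ x in (· + z) ⁻¹' Q ∩ Q, (∫⁻ t in Set.Ioc (0 : ℝ) 1, G (x + t • z)) ∂μ :=
        setLIntegral_mono' ((measurable_add_const z hQ).inter hQ) along_segment
    _ ≤ ∫⁻ x, (∫⁻ t in Set.Ioc (0 : ℝ) 1, G (x + t • z)) ∂μ := setLIntegral_le_lintegral _ _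
    _ = ∫⁻ t in Set.Ioc (0 : ℝ) 1, ∫⁻ x, G (x + t • z) ∂μ :=
        lintegral_lintegral_swap (hG.comp (by fun_prop)).aemeasurable
    _ = ∫⁻ x in Q, ENNReal.ofReal (lineDeriv ℝ v x z ^ 2) ∂μ := by
        simp_rw [lintegral_add_right_eq_self]
        simp [G, lintegral_indicator hQ]
    _ ≤ ∫⁻ x in Q, ENNReal.ofReal ((‖z‖ * ‖fderiv ℝ v x‖) ^ 2) ∂μ :=
        lintegral_mono_ae (ae_restrict_of_ae deriv_le)

lemma lintegral_lintegral_sq_sub_le {K : NNReal} {v : E → ℝ} (hv : LipschitzWith K v)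
    {Q : Set E} (hQ : MeasurableSet Q) (hc : Convex ℝ Q) (hb : Bornology.IsBounded Q)
    {h : ℝ} (hh : Metric.diam Q ≤ h) :
    ∫⁻ x in Q, ∫⁻ y in Q, ENNReal.ofReal ((v y - v x) ^ 2) ∂μ ∂μ ≤
      μ (Metric.closedBall 0 h) * ∫⁻ x in Q, ENNReal.ofReal ((h * ‖fderiv ℝ v x‖) ^ 2) ∂μ := by
  have hvm := hv.continuous.measurable
  set R := ∫⁻ x in Q, ENNReal.ofReal ((h * ‖fderiv ℝ v x‖) ^ 2) ∂μ
  have translate_le (z : E) :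
      ∫⁻ x in (· + z) ⁻¹' Q ∩ Q, ENNReal.ofReal ((v (x + z) - v x) ^ 2) ∂μ ≤
        (Metric.closedBall 0 h).indicator (fun _ => R) z := by
    rcases ((· + z) ⁻¹' Q ∩ Q).eq_empty_or_nonempty with hempty | ⟨x, hxz, hx⟩
    · simp [hempty]
    have hz : ‖z‖ ≤ h := by
      simpa using (Metric.dist_le_diam_of_mem hb hxz hx).trans hh
    rw [Set.indicator_of_mem (by simpa using hz)]
    refine (lintegral_sq_sub_translate_le μ hv hQ hc z).trans (lintegral_mono fun y => ?_)
    gcongr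
  calc ∫⁻ x in Q, ∫⁻ y in Q, ENNReal.ofReal ((v y - v x) ^ 2) ∂μ ∂μ
      = ∫⁻ z, ∫⁻ x in (· + z) ⁻¹' Q ∩ Q, ENNReal.ofReal ((v (x + z) - v x) ^ 2) ∂μ ∂μ :=
        lintegral_lintegral_eq_lintegral_translate (by fun_prop) hQ
    _ ≤ ∫⁻ z, (Metric.closedBall 0 h).indicator (fun _ => R) z ∂μ := lintegral_mono translate_le
    _ = μ (Metric.closedBall 0 h) * R := by
        rw [lintegral_indicator Metric.isClosed_closedBall.measurableSet, setLIntegral_const,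
          mul_comm]

lemma measureReal_mul_sq_le_setIntegral_sq_sub {X : Type*} [MeasurableSpace X] {μ : Measure X}
    {Q : Set X} (hQ : μ Q ≠ ⊤) {v : X → ℝ} (hv : IntegrableOn v Q μ)
    (hv2 : IntegrableOn (fun x => v x ^ 2) Q μ) (h0 : ∫ x in Q, v x ∂μ = 0) (c : ℝ) :
    μ.real Q * c ^ 2 ≤ ∫ x in Q, (v x - c) ^ 2 ∂μ := by
  have expand : ∫ x in Q, (v x - c) ^ 2 ∂μ = ∫ x in Q, v x ^ 2 ∂μ + μ.real Q * c ^ 2 := by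
    have hc : IntegrableOn (fun _ => c ^ 2) Q μ := integrableOn_const hQ
    have hcv : IntegrableOn (fun x => 2 * c * v x) Q μ := hv.const_mul _
    have hdiff : IntegrableOn (fun x => v x ^ 2 - 2 * c * v x) Q μ := hv2.sub hcv
    calc ∫ x in Q, (v x - c) ^ 2 ∂μ = ∫ x in Q, (v x ^ 2 - 2 * c * v x + c ^ 2) ∂μ := by
          congr with x
          ring
      _ = ∫ x in Q, v x ^ 2 ∂μ + μ.real Q * c ^ 2 := by
          rw [integral_add hdiff hc, integral_sub hv2 hcv, integral_const_mul, h0,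
            setIntegral_const, smul_eq_mul, mul_zero, sub_zero]
  have : 0 ≤ ∫ x in Q, v x ^ 2 ∂μ := integral_nonneg fun _ => sq_nonneg _
  linarith

lemma integrableOn_norm_fderiv_sq {K : NNReal} {v : E → ℝ} (hv : LipschitzWith K v)
    {Q : Set E} (hb : Bornology.IsBounded Q) :
    IntegrableOn (fun x => ‖fderiv ℝ v x‖ ^ 2) Q μ :=
  Measure.integrableOn_of_bounded (M := (K : ℝ) ^ 2) hb.measure_lt_top.ne
    ((measurable_fderiv ℝ v).norm.pow_const 2).aestronglyMeasurable <| .of_forall fun x => by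
      rw [norm_pow, norm_norm]
      gcongr
      exact norm_fderiv_le_of_lipschitz ℝ hv

/-- Averaging the fundamental theorem of calculus along the segments of `Q` bounds the variance of
`v` by the energy: substitute `y = x + z` in `∫∫ (v y - v x)²` and integrate over `z` last. -/
theorem poincare_inequality_of_convex {K : NNReal} {v : E → ℝ} (hv : LipschitzWith K v)
    {Q : Set E} (hQ : MeasurableSet Q) (hc : Convex ℝ Q) (hb : Bornology.IsBounded Q)
    {h : ℝ} (hh : Metric.diam Q ≤ h) (h0 : ∫ x in Q, v x ∂μ = 0) :
    μ.real Q * ∫ x in Q, v x ^ 2 ∂μ ≤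
      μ.real (Metric.closedBall 0 h) * (h ^ 2 * ∫ x in Q, ‖fderiv ℝ v x‖ ^ 2 ∂μ) := by
  have hball : μ (Metric.closedBall (0 : E) h) ≠ ⊤ := Metric.isBounded_closedBall.measure_lt_top.ne
  have hv2 : IntegrableOn (fun x => v x ^ 2) Q μ :=
    integrableOn_of_continuous_of_isBounded (hv.continuous.pow 2) hb
  have hsub (x : E) : IntegrableOn (fun y => (v y - v x) ^ 2) Q μ :=
    integrableOn_of_continuous_of_isBounded ((hv.continuous.sub continuous_const).pow 2) hb
  have variance_le : ENNReal.ofReal (μ.real Q * ∫ x in Q, v x ^ 2 ∂μ) ≤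
      ∫⁻ x in Q, ∫⁻ y in Q, ENNReal.ofReal ((v y - v x) ^ 2) ∂μ ∂μ := by
    rw [← integral_const_mul, ofReal_integral_eq_lintegral_ofReal
      (hv2.const_mul _) (.of_forall fun _ => by positivity)]
    refine lintegral_mono fun x => ?_
    rw [← ofReal_integral_eq_lintegral_ofReal (hsub x) (.of_forall fun _ => sq_nonneg _)]
    exact ENNReal.ofReal_le_ofReal <| measureReal_mul_sq_le_setIntegral_sq_sub
      hb.measure_lt_top.ne (integrableOn_of_continuous_of_isBounded hv.continuous hb) hv2 h0 (v x)
  have energy_eq : ∫⁻ x in Q, ENNReal.ofReal ((h * ‖fderiv ℝ v x‖) ^ 2) ∂μ =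
      ENNReal.ofReal (h ^ 2 * ∫ x in Q, ‖fderiv ℝ v x‖ ^ 2 ∂μ) := by
    rw [← integral_const_mul, ofReal_integral_eq_lintegral_ofReal
      ((integrableOn_norm_fderiv_sq μ hv hb).const_mul _) (.of_forall fun _ => by positivity)]
    simp only [mul_pow]
  have : 0 ≤ ∫ x in Q, ‖fderiv ℝ v x‖ ^ 2 ∂μ := integral_nonneg fun _ => sq_nonneg _
  have := variance_le.trans (lintegral_lintegral_sq_sub_le μ hv hQ hc hb hh)
  rwa [energy_eq, ← ofReal_measureReal hball, ← ENNReal.ofReal_mul measureReal_nonneg,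
    ENNReal.ofReal_le_ofReal_iff (by positivity)] at this

end Poincare

section Gradient

variable {d : ℕ}

lemma gradSq_nonneg (v : (Fin d → ℝ) → ℝ) (x : Fin d → ℝ) : 0 ≤ gradSq v x :=
  Finset.sum_nonneg fun _ _ => sq_nonneg _

lemma measurable_gradSq (v : (Fin d → ℝ) → ℝ) : Measurable (gradSq v) :=
  Finset.measurable_sum _ fun _ _ => (measurable_fderiv_apply_const ℝ v _).pow_const 2

lemma gradSq_le (v : (Fin d → ℝ) → ℝ) (x : Fin d → ℝ) :
    gradSq v x ≤ d * ‖fderiv ℝ v x‖ ^ 2 := by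
  have partial_le (i : Fin d) : fderiv ℝ v x (Pi.single i 1) ^ 2 ≤ ‖fderiv ℝ v x‖ ^ 2 := by
    rw [← sq_abs, ← Real.norm_eq_abs]
    gcongr
    simpa [Pi.norm_single] using (fderiv ℝ v x).le_opNorm (Pi.single i 1)
  simpa [gradSq] using Finset.sum_le_card_nsmul Finset.univ _ _ fun i _ => partial_le i

lemma norm_fderiv_sq_le (v : (Fin d → ℝ) → ℝ) (x : Fin d → ℝ) :
    ‖fderiv ℝ v x‖ ^ 2 ≤ d * gradSq v x := by
  have hd : 0 ≤ (d : ℝ) * gradSq v x := mul_nonneg d.cast_nonneg (gradSq_nonneg v x)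
  refine (Real.le_sqrt (norm_nonneg _) hd).1 ?_
  refine ContinuousLinearMap.opNorm_le_bound _ (Real.sqrt_nonneg _) fun z => ?_
  have coordinates : fderiv ℝ v x z = ∑ i, z i * fderiv ℝ v x (Pi.single i 1) := by
    conv_lhs => rw [pi_eq_sum_univ' z]
    simp
  refine abs_le_of_sq_le_sq ?_ (by positivity)
  calc fderiv ℝ v x z ^ 2
      = (∑ i, z i * fderiv ℝ v x (Pi.single i 1)) ^ 2 := by rw [coordinates]
    _ ≤ (∑ i, z i ^ 2) * gradSq v x := Finset.sum_mul_sq_le_sq_mul_sq _ _ _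
    _ ≤ (d * ‖z‖ ^ 2) * gradSq v x := by
        gcongr
        · exact gradSq_nonneg v x
        · have (i : Fin d) : z i ^ 2 ≤ ‖z‖ ^ 2 := by
            rw [← sq_abs]
            gcongr
            exact norm_le_pi_norm z i
          simpa using Finset.sum_le_card_nsmul Finset.univ _ _ fun i _ => this i
    _ = (√(d * gradSq v x) * ‖z‖) ^ 2 := by rw [mul_pow, Real.sq_sqrt hd]; ring

lemma fderiv_eq_zero_of_nonneg {E : Type*} [NormedAddCommGroup E] [NormedSpace ℝ E] {φ : E → ℝ}
    (hφ : 0 ≤ φ) {x : E} (hx : φ x = 0) : fderiv ℝ φ x = 0 :=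
  IsLocalMin.fderiv_eq_zero <| .of_forall fun y => hx.trans_le (hφ y)

lemma integrableOn_gradSq {K : NNReal} {v : (Fin d → ℝ) → ℝ} (hv : LipschitzWith K v)
    {Q : Set (Fin d → ℝ)} (hb : Bornology.IsBounded Q) : IntegrableOn (gradSq v) Q :=
  ((integrableOn_norm_fderiv_sq volume hv hb).const_mul (d : ℝ)).mono'
    (measurable_gradSq v).aestronglyMeasurable <| .of_forall fun x => by
      rw [Real.norm_of_nonneg (gradSq_nonneg v x)]
      exact gradSq_le v x

end Gradient

section UnitCell

variable {d : ℕ}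

lemma isBounded_unitCell (d : ℕ) : Bornology.IsBounded (unitCell d) :=
  .pi fun _ => Metric.isBounded_Ico 0 1

lemma measurableSet_unitCell (d : ℕ) : MeasurableSet (unitCell d) :=
  .univ_pi fun _ => measurableSet_Ico

lemma ZPeriodic.apply_fract {v : (Fin d → ℝ) → ℝ} (hp : ZPeriodic v) (x : Fin d → ℝ) :
    v (fun i => Int.fract (x i)) = v x := by
  rw [← hp _ fun i => ⌊x i⌋]
  congr with i
  exact Int.fract_add_floor (x i)

lemma integrableOn_unitCell_sq {v : (Fin d → ℝ) → ℝ} (hv : Continuous v) :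
    IntegrableOn (fun x => v x ^ 2) (unitCell d) :=
  integrableOn_of_continuous_of_isBounded (hv.pow 2) (isBounded_unitCell d)

lemma l2sq_pos {v : (Fin d → ℝ) → ℝ} (hp : ZPeriodic v) (hc : Continuous v) (h0 : v ≠ 0) :
    0 < l2sq v := by
  obtain ⟨x, hx⟩ := Function.ne_iff.1 h0
  have hfract : v (fun i => Int.fract (x i)) ≠ 0 := by rwa [hp.apply_fract]
  have support_open : IsOpen {z | v z ≠ 0} := isOpen_ne_fun hc continuous_const
  let openCell : Set (Fin d → ℝ) := Set.univ.pi fun _ => Set.Ioo 0 1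
  have hopen : IsOpen openCell := isOpen_set_pi Set.finite_univ fun _ _ => isOpen_Ioo
  have hclosure : (fun i => Int.fract (x i)) ∈ closure openCell := by
    rw [closure_pi_set]
    intro i _
    rw [closure_Ioo zero_ne_one]
    exact ⟨Int.fract_nonneg _, (Int.fract_lt_one _).le⟩
  have hmeet : ({z | v z ≠ 0} ∩ openCell).Nonempty :=
    mem_closure_iff.1 hclosure _ support_open hfract
  rw [l2sq, setIntegral_pos_iff_support_of_nonneg_ae (.of_forall fun _ => sq_nonneg _)
    (integrableOn_unitCell_sq hc)]
  refine ((support_open.inter hopen).measure_pos volume hmeet).trans_le (measure_mono ?_)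
  exact fun z hz => ⟨pow_ne_zero 2 hz.1, fun i hi => Set.Ioo_subset_Ico_self (hz.2 i hi)⟩

variable {V v : (Fin d → ℝ) → ℝ}

lemma integrableOn_mul_sq (hV : IntegrableOn V (unitCell d)) (hv : Continuous v) :
    IntegrableOn (fun x => V x * v x ^ 2) (unitCell d) := by
  obtain ⟨C, hC⟩ := (isBounded_unitCell d).isCompact_closure.exists_bound_of_continuousOn
    (hv.pow 2).continuousOn
  exact hV.mul_bdd (hv.pow 2).aestronglyMeasurable <|
    (ae_restrict_mem (measurableSet_unitCell d)).mono fun x hx => hC x (subset_closure hx)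

lemma integrableOn_energy {K : NNReal} (hV : IntegrableOn V (unitCell d))
    (hv : LipschitzWith K v) :
    IntegrableOn (fun x => gradSq v x + V x * v x ^ 2) (unitCell d) :=
  (integrableOn_gradSq hv (isBounded_unitCell d)).add (integrableOn_mul_sq hV hv.continuous)

end UnitCell

section MinMax

variable {d n : ℕ} {V : (Fin d → ℝ) → ℝ} {ι : Type*} [Fintype ι]

/-- The upper bounds for the Rayleigh quotient on some `n`-dimensional space of periodic Lipschitz
functions; the min-max value `minmaxVal d V n` is by definition their infimum. -/
def rayleighBounds (d : ℕ) (V : (Fin d → ℝ) → ℝ) (n : ℕ) : Set ℝ :=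
  {M | ∃ W : Submodule ℝ ((Fin d → ℝ) → ℝ),
    (W : Set ((Fin d → ℝ) → ℝ)) ⊆ PeriodicLipschitz d ∧ Module.finrank ℝ W = n ∧
      ∀ v ∈ W, v ≠ 0 → energySq V v ≤ M * l2sq v}

lemma minmaxVal_eq_sInf (d : ℕ) (V : (Fin d → ℝ) → ℝ) (n : ℕ) :
    minmaxVal d V n = sInf (rayleighBounds d V n) := rfl

/-- `PeriodicLipschitz d` as a subspace of the space of all functions. -/
def periodicLipschitzSubmodule (d : ℕ) : Submodule ℝ ((Fin d → ℝ) → ℝ) where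
  carrier := PeriodicLipschitz d
  zero_mem' := ⟨fun _ _ => rfl, 0, .const 0⟩
  add_mem' := by
    rintro v w ⟨hv, K, hK⟩ ⟨hw, L, hL⟩
    exact ⟨fun x k => congrArg₂ (· + ·) (hv x k) (hw x k), K + L, hK.add hL⟩
  smul_mem' := by
    rintro a v ⟨hv, K, hK⟩
    exact ⟨fun x k => congrArg (a • ·) (hv x k), ‖a‖₊ * K, (lipschitzWith_smul a).comp hK⟩

lemma PeriodicLipschitz.continuous {v : (Fin d → ℝ) → ℝ} (hv : v ∈ PeriodicLipschitz d) :
    Continuous v :=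
  let ⟨_, _, hK⟩ := hv
  hK.continuous

lemma setIntegral_eq_sum_add_sdiff {X : Type*} [MeasurableSpace X] {μ : Measure X} {U : Set X}
    {Q : ι → Set X} (hQm : ∀ p, MeasurableSet (Q p))
    (hQd : Pairwise fun p q => Disjoint (Q p) (Q q)) (hQU : ∀ p, Q p ⊆ U) {f : X → ℝ}
    (hf : IntegrableOn f U μ) :
    ∫ x in U, f x ∂μ = ∑ p, ∫ x in Q p, f x ∂μ + ∫ x in U \ ⋃ p, Q p, f x ∂μ := by
  rw [← integral_inter_add_sdiff (MeasurableSet.iUnion hQm) hf,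
    Set.inter_eq_right.2 (Set.iUnion_subset hQU),
    integral_iUnion_fintype hQm hQd fun p => hf.mono_set (hQU p)]

omit [Fintype ι] in
lemma mul_l2sq_le_energySq [Finite ι] (hVi : IntegrableOn V (unitCell d))
    (hV : ∀ x, 0 ≤ V x) {Q : ι → Set (Fin d → ℝ)} (hQm : ∀ p, MeasurableSet (Q p))
    (hQd : Pairwise fun p q => Disjoint (Q p) (Q q)) (hQU : ∀ p, Q p ⊆ unitCell d) {S : ℝ}
    (hS : ∀ x ∈ unitCell d \ ⋃ p, Q p, S ≤ V x) {v : (Fin d → ℝ) → ℝ}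
    (hv : v ∈ PeriodicLipschitz d)
    (hP : ∀ p, S * ∫ x in Q p, v x ^ 2 ≤ ∫ x in Q p, gradSq v x) :
    S * l2sq v ≤ energySq V v := by
  cases nonempty_fintype ι
  obtain ⟨-, K, hK⟩ := hv
  have sq_int := integrableOn_unitCell_sq hK.continuous
  have energy_int := integrableOn_energy hVi hK
  rw [energySq, l2sq, setIntegral_eq_sum_add_sdiff hQm hQd hQU sq_int,
    setIntegral_eq_sum_add_sdiff hQm hQd hQU energy_int, mul_add, Finset.mul_sum]
  refine add_le_add (Finset.sum_le_sum fun p _ => (hP p).trans ?_) ?_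
  · refine setIntegral_mono_on (integrableOn_gradSq hK ((isBounded_unitCell d).subset (hQU p)))
      (energy_int.mono_set (hQU p)) (hQm p) fun x _ => ?_
    exact le_add_of_nonneg_right (mul_nonneg (hV x) (sq_nonneg _))
  · rw [← integral_const_mul]
    refine setIntegral_mono_on ((sq_int.mono_set Set.sdiff_subset).const_mul S)
      (energy_int.mono_set Set.sdiff_subset)
      ((measurableSet_unitCell d).diff (MeasurableSet.iUnion hQm)) fun x hx => ?_
    have := mul_le_mul_of_nonneg_right (hS x hx) (sq_nonneg (v x))
    have := gradSq_nonneg v x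
    linarith

lemma exists_mem_ne_zero_forall_setIntegral_eq_zero {W : Submodule ℝ ((Fin d → ℝ) → ℝ)}
    (hW : (W : Set ((Fin d → ℝ) → ℝ)) ⊆ PeriodicLipschitz d) {Q : ι → Set (Fin d → ℝ)}
    (hQb : ∀ p, Bornology.IsBounded (Q p)) (hn : Fintype.card ι < Module.finrank ℝ W) :
    ∃ v ∈ W, v ≠ 0 ∧ ∀ p, ∫ x in Q p, v x = 0 := by
  have integrable (w : W) (p : ι) : IntegrableOn (w : (Fin d → ℝ) → ℝ) (Q p) :=
    integrableOn_of_continuous_of_isBounded (PeriodicLipschitz.continuous (hW w.2)) (hQb p)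
  let means : W →ₗ[ℝ] ι → ℝ :=
    { toFun w p := ∫ x in Q p, (w : (Fin d → ℝ) → ℝ) x
      map_add' w₁ w₂ := funext fun p => integral_add (integrable w₁ p) (integrable w₂ p)
      map_smul' a w := funext fun p => integral_const_mul a _ }
  have : FiniteDimensional ℝ W := Module.finite_of_finrank_pos (by omega)
  have hker : LinearMap.ker means ≠ ⊥ :=
    LinearMap.ker_ne_bot_of_finrank_lt (by rwa [Module.finrank_fintype_fun_eq_card])
  obtain ⟨w, hw, hw0⟩ := Submodule.exists_mem_ne_zero_of_ne_bot hker
  exact ⟨w, w.2, by simpa using hw0, fun p => congrFun hw p⟩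

/-- The lower half of Courant's principle: a space of dimension larger than the number of cells
contains a function with mean zero on each of them, and its Rayleigh quotient is at least `S`. -/
lemma le_of_mem_rayleighBounds (hVi : IntegrableOn V (unitCell d)) (hV : ∀ x, 0 ≤ V x)
    {Q : ι → Set (Fin d → ℝ)} (hQm : ∀ p, MeasurableSet (Q p))
    (hQd : Pairwise fun p q => Disjoint (Q p) (Q q)) (hQU : ∀ p, Q p ⊆ unitCell d) {S : ℝ}
    (hS : ∀ x ∈ unitCell d \ ⋃ p, Q p, S ≤ V x)
    (hP : ∀ p, ∀ v ∈ PeriodicLipschitz d, ∫ x in Q p, v x = 0 →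
      S * ∫ x in Q p, v x ^ 2 ≤ ∫ x in Q p, gradSq v x)
    (hn : Fintype.card ι < n) {M : ℝ} (hM : M ∈ rayleighBounds d V n) : S ≤ M := by
  obtain ⟨W, hW, rfl, hbound⟩ := hM
  obtain ⟨v, hvW, hv0, hmean⟩ := exists_mem_ne_zero_forall_setIntegral_eq_zero hW
    (fun p => (isBounded_unitCell d).subset (hQU p)) hn
  have hv := hW hvW
  refine le_of_mul_le_mul_right ?_ (l2sq_pos hv.1 (PeriodicLipschitz.continuous hv) hv0)
  exact (mul_l2sq_le_energySq hVi hV hQm hQd hQU hS hv fun p => hP p v hv (hmean p)).trans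
    (hbound v hvW hv0)

lemma nonneg_of_mem_rayleighBounds (hVi : IntegrableOn V (unitCell d)) (hV : ∀ x, 0 ≤ V x)
    (hn : 0 < n) {M : ℝ} (hM : M ∈ rayleighBounds d V n) : 0 ≤ M :=
  le_of_mem_rayleighBounds (ι := Empty) (Q := Empty.elim) hVi hV nofun nofun nofun
    (fun x _ => hV x) nofun (by simpa) hM

lemma sum_sq_of_pairwise_mul_eq_zero {R : Type*} [CommSemiring R] {y : ι → R}
    (hy : Pairwise fun p q => y p * y q = 0) : (∑ p, y p) ^ 2 = ∑ p, y p ^ 2 := by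
  rw [sq, Finset.sum_mul_sum]
  refine Finset.sum_congr rfl fun p _ => ?_
  rw [sq, Finset.sum_eq_single p (fun q _ hq => hy hq.symm) (by simp)]

section DisjointSupports

variable {φ : ι → (Fin d → ℝ) → ℝ} (hφ : ∀ p, φ p ∈ PeriodicLipschitz d)
  (hφd : Pairwise fun p q => φ p * φ q = 0) (a : ι → ℝ)

include hφd

lemma sum_smul_apply_sq (x : Fin d → ℝ) :
    (∑ p, a p • φ p) x ^ 2 = ∑ p, a p ^ 2 * φ p x ^ 2 := by
  have hdisj (p q : ι) (hpq : p ≠ q) : a p * φ p x * (a q * φ q x) = 0 := by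
    have := congrFun (hφd hpq) x
    simp only [Pi.mul_apply, Pi.zero_apply] at this
    linear_combination a p * a q * this
  simp [Finset.sum_apply, sum_sq_of_pairwise_mul_eq_zero hdisj, mul_pow]

lemma gradSq_sum_smul (hφ0 : ∀ p, 0 ≤ φ p) {x : Fin d → ℝ}
    (hx : ∀ p, DifferentiableAt ℝ (φ p) x) :
    gradSq (∑ p, a p • φ p) x = ∑ p, a p ^ 2 * gradSq (φ p) x := by
  have fderiv_sum : fderiv ℝ (∑ p, a p • φ p) x = ∑ p, a p • fderiv ℝ (φ p) x :=
    (HasFDerivAt.sum fun p _ => (hx p).hasFDerivAt.const_smul (a p)).fderiv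
  have hdisj (i : Fin d) (p q : ι) (hpq : p ≠ q) :
      a p * fderiv ℝ (φ p) x (Pi.single i 1) * (a q * fderiv ℝ (φ q) x (Pi.single i 1)) = 0 := by
    rcases mul_eq_zero.1 (congrFun (hφd hpq) x) with h | h <;>
      simp [fderiv_eq_zero_of_nonneg (hφ0 _) h]
  simp only [gradSq, fderiv_sum, Finset.mul_sum]
  rw [Finset.sum_comm]
  refine Finset.sum_congr rfl fun i _ => ?_
  simp [sum_sq_of_pairwise_mul_eq_zero (hdisj i), mul_pow]

include hφ

lemma l2sq_sum_smul : l2sq (∑ p, a p • φ p) = ∑ p, a p ^ 2 * l2sq (φ p) := by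
  simp only [l2sq, sum_smul_apply_sq hφd, ← integral_const_mul]
  exact integral_finsetSum _ fun p _ =>
    (integrableOn_unitCell_sq (PeriodicLipschitz.continuous (hφ p))).const_mul _

lemma energySq_sum_smul (hφ0 : ∀ p, 0 ≤ φ p) (hVi : IntegrableOn V (unitCell d)) :
    energySq V (∑ p, a p • φ p) = ∑ p, a p ^ 2 * energySq V (φ p) := by
  simp only [energySq, ← integral_const_mul]
  have energy_int (p : ι) :
      IntegrableOn (fun x => a p ^ 2 * (gradSq (φ p) x + V x * φ p x ^ 2)) (unitCell d) := by
    obtain ⟨-, K, hK⟩ := hφ p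
    exact (integrableOn_energy hVi hK).const_mul _
  rw [← integral_finsetSum _ fun p _ => energy_int p]
  refine integral_congr_ae (ae_restrict_of_ae ?_)
  have hdiff : ∀ᵐ x, ∀ p, DifferentiableAt ℝ (φ p) x := ae_all_iff.2 fun p => by
    obtain ⟨-, K, hK⟩ := hφ p
    exact hK.ae_differentiableAt
  filter_upwards [hdiff] with x hx
  rw [gradSq_sum_smul hφd a hφ0 hx, sum_smul_apply_sq hφd, Finset.mul_sum,
    ← Finset.sum_add_distrib]
  exact Finset.sum_congr rfl fun p _ => by ring

omit [Fintype ι] in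
lemma linearIndependent_of_disjoint [Finite ι] (hφne : ∀ p, φ p ≠ 0) :
    LinearIndependent ℝ φ := by
  cases nonempty_fintype ι
  refine Fintype.linearIndependent_iff.2 fun a ha p => ?_
  have l2_pos (q : ι) : 0 < l2sq (φ q) :=
    l2sq_pos (hφ q).1 (PeriodicLipschitz.continuous (hφ q)) (hφne q)
  have hsum : ∑ q, a q ^ 2 * l2sq (φ q) = 0 := by
    rw [← l2sq_sum_smul hφ hφd, ha]
    simp [l2sq]
  rw [Finset.sum_eq_zero_iff_of_nonneg fun q _ => mul_nonneg (sq_nonneg _) (l2_pos q).le] at hsum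
  exact pow_eq_zero_iff two_ne_zero |>.1 <|
    (mul_eq_zero.1 (hsum p (Finset.mem_univ p))).resolve_right (l2_pos p).ne'

/-- The upper half of Courant's principle: energy and mass are both additive on the span of
functions with disjoint supports. -/
lemma mem_rayleighBounds_card (hφ0 : ∀ p, 0 ≤ φ p) (hφne : ∀ p, φ p ≠ 0)
    (hVi : IntegrableOn V (unitCell d)) {M : ℝ}
    (hM : ∀ p, energySq V (φ p) ≤ M * l2sq (φ p)) :
    M ∈ rayleighBounds d V (Fintype.card ι) := by
  refine ⟨Submodule.span ℝ (Set.range φ), ?_,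
    finrank_span_eq_card (linearIndependent_of_disjoint hφ hφd hφne), fun v hv _ => ?_⟩
  · exact Submodule.span_le (p := periodicLipschitzSubmodule d) |>.2 (Set.range_subset_iff.2 hφ)
  obtain ⟨a, rfl⟩ := (Submodule.mem_span_range_iff_exists_fun ℝ).1 hv
  rw [energySq_sum_smul hφ hφd a hφ0 hVi, l2sq_sum_smul hφ hφd, Finset.mul_sum]
  refine Finset.sum_le_sum fun p _ => ?_
  rw [mul_left_comm]
  exact mul_le_mul_of_nonneg_left (hM p) (sq_nonneg _)

end DisjointSupports

end MinMax

section Bump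

variable {d : ℕ} {r : ℝ} {c x : Fin d → ℝ}

/-- The projection of `ℝ^d` onto the flat torus `ℝ^d / ℤ^d` with the sup distance. -/
def toTorus (x : Fin d → ℝ) : Fin d → UnitAddCircle := fun i => x i

lemma dist_toTorus_apply (x y : Fin d → ℝ) (i : Fin d) :
    dist (toTorus x i) (toTorus y i) = |x i - y i - round (x i - y i)| := by
  rw [dist_eq_norm, toTorus, toTorus, ← AddCircle.coe_sub, UnitAddCircle.norm_eq]

lemma dist_toTorus_le (x y : Fin d → ℝ) : dist (toTorus x) (toTorus y) ≤ dist x y :=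
  (dist_pi_le_iff dist_nonneg).2 fun i => by
    rw [dist_toTorus_apply]
    exact (round_le (x i - y i) 0).trans (by simpa [Real.dist_eq] using dist_le_pi_dist x y i)

lemma dist_lt_of_dist_toTorus_lt (hc : ∀ i, c i ∈ Set.Icc r (1 - r)) (hx : x ∈ unitCell d)
    (hr : 0 < r) (h : dist (toTorus x) (toTorus c) < r) : dist x c < r := by
  rw [dist_pi_lt_iff hr] at h ⊢
  intro i
  have hi := h i
  rw [dist_toTorus_apply] at hi
  have round_zero : round (x i - c i) = 0 := by
    have := abs_lt.1 hi
    have := hx i (Set.mem_univ i)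
    have := hc i
    simp only [Set.mem_Icc, Set.mem_Ico] at *
    have : ((-1 : ℤ) : ℝ) < round (x i - c i) := by push_cast; linarith
    have : (round (x i - c i) : ℝ) < (1 : ℤ) := by push_cast; linarith
    rw [Int.cast_lt] at *
    omega
  simpa [round_zero, Real.dist_eq] using hi

/-- The periodic tent function of height `1` and radius `r` (in the sup distance) centred at the
lattice translates of `c`. -/
def bump (r : ℝ) (c x : Fin d → ℝ) : ℝ := max 0 (1 - r⁻¹ * dist (toTorus x) (toTorus c))

lemma bump_nonneg (r : ℝ) (c : Fin d → ℝ) : 0 ≤ bump r c := fun _ => le_max_left _ _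

lemma bump_le_one (hr : 0 ≤ r) (c x : Fin d → ℝ) : bump r c x ≤ 1 :=
  max_le zero_le_one (sub_le_self _ (by positivity))

lemma zPeriodic_bump (r : ℝ) (c : Fin d → ℝ) : ZPeriodic (bump r c) := fun x k => by
  have : toTorus (x + fun i => (k i : ℝ)) = toTorus x := by
    ext i
    simp [toTorus]
  rw [bump, bump, this]

lemma lipschitzWith_bump (hr : 0 ≤ r) (c : Fin d → ℝ) :
    LipschitzWith r⁻¹.toNNReal (bump r c) := by
  refine LipschitzWith.const_max (.of_dist_le_mul fun x y => ?_) 0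
  rw [dist_sub_left, Real.dist_eq, ← mul_sub, abs_mul, abs_of_nonneg (inv_nonneg.2 hr),
    Real.coe_toNNReal _ (inv_nonneg.2 hr)]
  gcongr
  exact (abs_dist_sub_le _ _ _).trans (dist_toTorus_le x y)

lemma bump_mem_periodicLipschitz (hr : 0 ≤ r) (c : Fin d → ℝ) : bump r c ∈ PeriodicLipschitz d :=
  ⟨zPeriodic_bump r c, _, lipschitzWith_bump hr c⟩

lemma gradSq_bump_le (hr : 0 ≤ r) (c x : Fin d → ℝ) : gradSq (bump r c) x ≤ d * r⁻¹ ^ 2 := by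
  refine (gradSq_le _ x).trans ?_
  have := norm_fderiv_le_of_lipschitz ℝ (lipschitzWith_bump hr c) (x₀ := x)
  rw [Real.coe_toNNReal _ (inv_nonneg.2 hr)] at this
  gcongr

lemma half_le_bump (hr : 0 < r) (hx : dist x c ≤ r / 2) : 1 / 2 ≤ bump r c x := by
  refine le_max_of_le_right ?_
  have : dist (toTorus x) (toTorus c) ≤ r / 2 := (dist_toTorus_le x c).trans hx
  calc (1 / 2 : ℝ) = 1 - r⁻¹ * (r / 2) := by field_simp; norm_num
    _ ≤ 1 - r⁻¹ * dist (toTorus x) (toTorus c) := by gcongr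

lemma bump_ne_zero (hr : 0 < r) (c : Fin d → ℝ) : bump r c ≠ 0 := fun h => by
  have : 1 / 2 ≤ bump r c c := half_le_bump hr (by simpa using (half_pos hr).le)
  rw [h] at this
  norm_num at this

lemma mem_ball_of_bump_ne_zero (hr : 0 < r) (hc : ∀ i, c i ∈ Set.Icc r (1 - r))
    (hx : x ∈ unitCell d) (h : bump r c x ≠ 0) : x ∈ Metric.ball c r := by
  refine dist_lt_of_dist_toTorus_lt hc hx hr ?_
  contrapose! h
  refine max_eq_left ?_
  rw [sub_nonpos, le_inv_mul_iff₀ hr, mul_one]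
  exact h

lemma bump_mul_bump_eq_zero (hr : 0 < r) {c c' : Fin d → ℝ} (hc : ∀ i, c i ∈ Set.Icc r (1 - r))
    (hc' : ∀ i, c' i ∈ Set.Icc r (1 - r)) (h : Disjoint (Metric.ball c r) (Metric.ball c' r)) :
    bump r c * bump r c' = 0 := by
  ext x
  rw [Pi.mul_apply, Pi.zero_apply, ← (zPeriodic_bump r c).apply_fract,
    ← (zPeriodic_bump r c').apply_fract]
  have hx : (fun i => Int.fract (x i)) ∈ unitCell d :=
    fun i _ => ⟨Int.fract_nonneg _, Int.fract_lt_one _⟩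
  by_contra hne
  obtain ⟨h₁, h₂⟩ := mul_ne_zero_iff.1 hne
  exact h.ne_of_mem (mem_ball_of_bump_ne_zero hr hc hx h₁)
    (mem_ball_of_bump_ne_zero hr hc' hx h₂) rfl

lemma energySq_bump_le {V : (Fin d → ℝ) → ℝ} (hVi : IntegrableOn V (unitCell d)) {α : ℝ}
    (hα : 0 ≤ α) (hr : 0 < r) (hc : ∀ i, c i ∈ Set.Icc r (1 - r))
    (hV : ∀ x ∈ Metric.ball c r, V x ≤ α) :
    energySq V (bump r c) ≤ (2 * r) ^ d * (d * r⁻¹ ^ 2 + α) := by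
  have hball : volume (Metric.ball c r) ≠ ⊤ := Metric.isBounded_ball.measure_lt_top.ne
  have pointwise_le (x : Fin d → ℝ) (hx : x ∈ unitCell d) :
      gradSq (bump r c) x + V x * bump r c x ^ 2 ≤
        (Metric.ball c r).indicator (fun _ => d * r⁻¹ ^ 2 + α) x := by
    rcases eq_or_ne (bump r c x) 0 with h0 | h0
    · have : gradSq (bump r c) x = 0 := by
        simp [gradSq, fderiv_eq_zero_of_nonneg (bump_nonneg r c) h0]
      rw [this, h0, zero_pow two_ne_zero, mul_zero, add_zero]
      exact Set.indicator_nonneg (fun _ _ => by positivity) x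
    · have hxc := mem_ball_of_bump_ne_zero hr hc hx h0
      rw [Set.indicator_of_mem hxc]
      have sq_le_one : bump r c x ^ 2 ≤ 1 := pow_le_one₀ (bump_nonneg r c x) (bump_le_one hr.le c x)
      refine add_le_add (gradSq_bump_le hr.le c x) ?_
      exact (mul_le_mul (hV x hxc) sq_le_one (sq_nonneg _) hα).trans_eq (mul_one α)
  have indicator_int : IntegrableOn
      ((Metric.ball c r).indicator fun _ => d * r⁻¹ ^ 2 + α) (unitCell d) :=
    ((integrableOn_const hball).integrable_indicator measurableSet_ball).integrableOn
  calc energySq V (bump r c)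
      ≤ ∫ x in unitCell d, (Metric.ball c r).indicator (fun _ => d * r⁻¹ ^ 2 + α) x :=
        setIntegral_mono_on (integrableOn_energy hVi (lipschitzWith_bump hr.le c)) indicator_int
          (measurableSet_unitCell d) pointwise_le
    _ = volume.real (unitCell d ∩ Metric.ball c r) * (d * r⁻¹ ^ 2 + α) := by
        rw [setIntegral_indicator measurableSet_ball, setIntegral_const, smul_eq_mul]
    _ ≤ volume.real (Metric.ball c r) * (d * r⁻¹ ^ 2 + α) := by
        gcongr
        exact Set.inter_subset_right
    _ = (2 * r) ^ d * (d * r⁻¹ ^ 2 + α) := by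
        rw [Measure.real, Real.volume_pi_ball _ hr, ENNReal.toReal_ofReal (by positivity),
          Fintype.card_fin]

lemma le_l2sq_bump (hr : 0 < r) (hc : ∀ i, c i ∈ Set.Icc r (1 - r)) :
    r ^ d / 4 ≤ l2sq (bump r c) := by
  have closedBall_subset : Metric.closedBall c (r / 2) ⊆ unitCell d := fun x hx i _ => by
    have := abs_le.1 ((dist_le_pi_dist x c i).trans hx)
    have := hc i
    simp only [Set.mem_Icc, Set.mem_Ico] at *
    constructor <;> linarith
  have bump_int := integrableOn_unitCell_sq (lipschitzWith_bump hr.le c).continuous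
  calc r ^ d / 4 = ∫ _ in Metric.closedBall c (r / 2), (1 / 2 : ℝ) ^ 2 := by
        rw [setIntegral_const, Measure.real, Real.volume_pi_closedBall _ (by positivity),
          ENNReal.toReal_ofReal (by positivity), Fintype.card_fin, mul_div_cancel₀ r two_ne_zero,
          smul_eq_mul]
        ring
    _ ≤ ∫ x in Metric.closedBall c (r / 2), bump r c x ^ 2 := by
        refine setIntegral_mono_on
          (integrableOn_const Metric.isBounded_closedBall.measure_lt_top.ne)
          (bump_int.mono_set closedBall_subset) measurableSet_closedBall fun x hx => ?_
        have := half_le_bump hr (Metric.mem_closedBall.1 hx)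
        gcongr
    _ ≤ l2sq (bump r c) :=
        setIntegral_mono_set bump_int (.of_forall fun _ => sq_nonneg _)
          closedBall_subset.eventuallyLE

lemma energySq_bump_le_mul_l2sq {V : (Fin d → ℝ) → ℝ} (hVi : IntegrableOn V (unitCell d)) {α : ℝ}
    (hα : 0 ≤ α) (hr : 0 < r) (hc : ∀ i, c i ∈ Set.Icc r (1 - r))
    (hV : ∀ x ∈ Metric.ball c r, V x ≤ α) :
    energySq V (bump r c) ≤ 4 * 2 ^ d * (d * r⁻¹ ^ 2 + α) * l2sq (bump r c) :=
  calc energySq V (bump r c) ≤ (2 * r) ^ d * (d * r⁻¹ ^ 2 + α) := energySq_bump_le hVi hα hr hc hV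
    _ = 4 * 2 ^ d * (d * r⁻¹ ^ 2 + α) * (r ^ d / 4) := by ring
    _ ≤ 4 * 2 ^ d * (d * r⁻¹ ^ 2 + α) * l2sq (bump r c) := by
        gcongr
        exact le_l2sq_bump hr hc

end Bump

section Cube

variable {d : ℕ} {h : ℝ} {q q' : Fin d → ℤ}

/-- The half-open cube of side `h` with lower-left corner `h q`; for fixed `h > 0` these cubes
partition `ℝ^d`. -/
def halfOpenCube (h : ℝ) (q : Fin d → ℤ) : Set (Fin d → ℝ) :=
  Set.univ.pi fun i => Set.Ico (q i * h) ((q i + 1) * h)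

lemma mem_halfOpenCube (hh : 0 < h) {x : Fin d → ℝ} :
    x ∈ halfOpenCube h q ↔ ∀ i, ⌊x i / h⌋ = q i := by
  simp only [halfOpenCube, Set.mem_univ_pi, Set.mem_Ico, Int.floor_eq_iff, le_div_iff₀ hh,
    div_lt_iff₀ hh]

lemma measurableSet_halfOpenCube (h : ℝ) (q : Fin d → ℤ) : MeasurableSet (halfOpenCube h q) :=
  MeasurableSet.univ_pi fun _ => measurableSet_Ico

lemma disjoint_halfOpenCube (hh : 0 < h) (hq : q ≠ q') :
    Disjoint (halfOpenCube h q) (halfOpenCube h q') :=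
  Set.disjoint_left.2 fun _ hx hx' => hq <| funext fun i =>
    ((mem_halfOpenCube hh).1 hx i).symm.trans ((mem_halfOpenCube hh).1 hx' i)

lemma convex_halfOpenCube (h : ℝ) (q : Fin d → ℤ) : Convex ℝ (halfOpenCube h q) :=
  convex_pi fun _ _ => convex_Ico _ _

lemma isBounded_halfOpenCube (h : ℝ) (q : Fin d → ℤ) : Bornology.IsBounded (halfOpenCube h q) :=
  Bornology.IsBounded.pi fun _ => Metric.isBounded_Ico _ _

lemma diam_halfOpenCube_le (hh : 0 ≤ h) (q : Fin d → ℤ) : Metric.diam (halfOpenCube h q) ≤ h := by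
  refine Metric.diam_le_of_forall_dist_le hh fun x hx y hy => (dist_pi_le_iff hh).2 fun i => ?_
  have hxi := hx i (Set.mem_univ i)
  have hyi := hy i (Set.mem_univ i)
  rw [Set.mem_Ico, add_one_mul] at hxi hyi
  rw [Real.dist_eq, abs_le]
  constructor <;> linarith

lemma volume_real_halfOpenCube (hh : 0 ≤ h) (q : Fin d → ℤ) :
    volume.real (halfOpenCube h q) = h ^ d := by
  rw [Measure.real, halfOpenCube, Real.volume_pi_Ico_toReal fun i => by nlinarith]
  simp [add_one_mul]

lemma ball_subset_halfOpenCube (h : ℝ) (q : Fin d → ℤ) :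
    Metric.ball (fun i => (q i + 1 / 2) * h) (h / 2) ⊆ halfOpenCube h q := fun x hx i _ => by
  have := abs_lt.1 ((dist_le_pi_dist x _ i).trans_lt hx)
  constructor <;> linarith

lemma poincare_inequality_halfOpenCube (hh : 0 < h) {v : (Fin d → ℝ) → ℝ} {K : NNReal}
    (hv : LipschitzWith K v) (h0 : ∫ x in halfOpenCube h q, v x = 0) :
    ∫ x in halfOpenCube h q, v x ^ 2 ≤ 2 ^ d * d * h ^ 2 * ∫ x in halfOpenCube h q, gradSq v x := by
  have hb := isBounded_halfOpenCube h q
  have poincare := poincare_inequality_of_convex volume hv (measurableSet_halfOpenCube h q)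
    (convex_halfOpenCube h q) hb (diam_halfOpenCube_le hh.le q) h0
  rw [volume_real_halfOpenCube hh.le, Measure.real, Real.volume_pi_closedBall _ hh.le,
    ENNReal.toReal_ofReal (by positivity), Fintype.card_fin] at poincare
  have fderiv_le : ∫ x in halfOpenCube h q, ‖fderiv ℝ v x‖ ^ 2 ≤
      d * ∫ x in halfOpenCube h q, gradSq v x := by
    rw [← integral_const_mul]
    exact integral_mono (integrableOn_norm_fderiv_sq volume hv hb)
      ((integrableOn_gradSq hv hb).const_mul _) fun x => norm_fderiv_sq_le v x
  refine le_of_mul_le_mul_left ?_ (pow_pos hh d)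
  calc h ^ d * ∫ x in halfOpenCube h q, v x ^ 2
      ≤ (2 * h) ^ d * (h ^ 2 * ∫ x in halfOpenCube h q, ‖fderiv ℝ v x‖ ^ 2) := poincare
    _ ≤ (2 * h) ^ d * (h ^ 2 * (d * ∫ x in halfOpenCube h q, gradSq v x)) := by gcongr
    _ = h ^ d * (2 ^ d * d * h ^ 2 * ∫ x in halfOpenCube h q, gradSq v x) := by ring

end Cube

section Checkerboard

variable {d m n ℓ : ℕ} {ε α β S : ℝ}

/-- Each axis of the unit cell carries the `m` even intervals `[2jε, (2j + 1)ε)`, cut into `ℓ`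
pieces of length `ε / ℓ`; `valleyIndex (j, s)` is the position of the `s`-th piece of the `j`-th
interval in the grid of mesh `ε / ℓ`. -/
def valleyIndex (q : Fin m × Fin ℓ) : ℤ := q.2 + 2 * q.1 * ℓ

lemma valleyIndex_ediv (q : Fin m × Fin ℓ) : valleyIndex q / ℓ = 2 * q.1 := by
  have hℓ : (ℓ : ℤ) ≠ 0 := by exact_mod_cast q.2.pos.ne'
  rw [valleyIndex, Int.add_mul_ediv_right _ _ hℓ,
    Int.ediv_eq_zero_of_lt (by omega) (by omega), zero_add]

lemma valleyIndex_emod (q : Fin m × Fin ℓ) : valleyIndex q % ℓ = q.2 := by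
  rw [valleyIndex, Int.add_mul_emod_self_right, Int.emod_eq_of_lt (by omega) (by omega)]

lemma valleyIndex_injective : Function.Injective (valleyIndex : Fin m × Fin ℓ → ℤ) := by
  intro q q' h
  have hdiv := valleyIndex_ediv q
  have hmod := valleyIndex_emod q
  rw [h, valleyIndex_ediv] at hdiv
  rw [h, valleyIndex_emod] at hmod
  ext <;> omega

lemma valleyIndex_nonneg (q : Fin m × Fin ℓ) : 0 ≤ valleyIndex q := by
  unfold valleyIndex
  positivity

lemma valleyIndex_lt (q : Fin m × Fin ℓ) : valleyIndex q < 2 * m * ℓ := by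
  have hℓ : (0 : ℤ) < ℓ := by exact_mod_cast q.2.pos
  rw [← Int.ediv_lt_iff_lt_mul hℓ, valleyIndex_ediv]
  omega

lemma exists_valleyIndex_eq {z : ℤ} (hz : 0 ≤ z) (hz' : z < 2 * m * ℓ) (heven : Even (z / ℓ)) :
    ∃ q : Fin m × Fin ℓ, valleyIndex q = z := by
  have hℓ : (0 : ℤ) < ℓ := by
    by_contra! h
    have : (ℓ : ℤ) = 0 := by omega
    simp only [this, mul_zero] at hz'
    omega
  obtain ⟨j, hj⟩ := heven
  have div_nonneg := Int.ediv_nonneg hz hℓ.le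
  have div_lt := (Int.ediv_lt_iff_lt_mul hℓ).2 hz'
  have mod_nonneg := Int.emod_nonneg z hℓ.ne'
  have mod_lt := Int.emod_lt_of_pos z hℓ
  refine ⟨(⟨j.toNat, by omega⟩, ⟨(z % ℓ).toNat, by omega⟩), ?_⟩
  rw [valleyIndex, Int.toNat_of_nonneg mod_nonneg, Int.toNat_of_nonneg (by omega), two_mul, ← hj,
    mul_comm, Int.emod_add_mul_ediv]

/-- The cubes of side `ε / ℓ` into which the `m ^ d` potential valleys of the unit cell are
subdivided. -/
def valleyCube (ε : ℝ) (p : Fin d → Fin m × Fin ℓ) : Set (Fin d → ℝ) :=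
  halfOpenCube (ε / ℓ) fun i => valleyIndex (p i)

lemma disjoint_valleyCube (hε : 0 < ε) (hℓ : 0 < ℓ) {p p' : Fin d → Fin m × Fin ℓ} (hp : p ≠ p') :
    Disjoint (valleyCube ε p) (valleyCube ε p') :=
  disjoint_halfOpenCube (by positivity) fun h =>
    hp (funext fun i => valleyIndex_injective (congrFun h i))

lemma valleyIndex_add_one_mul_le (hε : 0 < ε) (hm : 2 * ε * m = 1) (q : Fin m × Fin ℓ) :
    (valleyIndex q + 1 : ℝ) * (ε / ℓ) ≤ 1 := by
  have hℓ : (0 : ℝ) < ℓ := by exact_mod_cast q.2.pos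
  have : (valleyIndex q + 1 : ℝ) ≤ 2 * m * ℓ := by exact_mod_cast valleyIndex_lt q
  calc (valleyIndex q + 1 : ℝ) * (ε / ℓ) ≤ 2 * m * ℓ * (ε / ℓ) := by gcongr
    _ = 2 * ε * m := by field_simp
    _ = 1 := hm

lemma valleyCube_subset_unitCell (hε : 0 < ε) (hm : 2 * ε * m = 1) (p : Fin d → Fin m × Fin ℓ) :
    valleyCube ε p ⊆ unitCell d := fun _ hx i hi =>
  have index_nonneg : (0 : ℝ) ≤ valleyIndex (p i) := by exact_mod_cast valleyIndex_nonneg (p i)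
  ⟨(hx i hi).1.trans' (by positivity),
    (hx i hi).2.trans_le (valleyIndex_add_one_mul_le hε hm (p i))⟩

lemma floor_div_eq_floor_div_ediv (hℓ : 0 < ℓ) (t : ℝ) : ⌊t / ε⌋ = ⌊t / (ε / ℓ)⌋ / (ℓ : ℤ) := by
  have : (ℓ : ℝ) ≠ 0 := by positivity
  rw [← Int.floor_div_natCast, div_div, div_mul_cancel₀ _ this]

lemma iUnion_valleyCube (d : ℕ) (hε : 0 < ε) (hm : 2 * ε * m = 1) (hℓ : 0 < ℓ) :
    ⋃ p : Fin d → Fin m × Fin ℓ, valleyCube ε p =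
      unitCell d ∩ {x | ∀ i, Even ⌊x i / ε⌋} := by
  have side_pos : 0 < ε / ℓ := by positivity
  ext x
  rw [Set.mem_iUnion]
  constructor
  · rintro ⟨p, hp⟩
    refine ⟨valleyCube_subset_unitCell hε hm p hp, fun i => ?_⟩
    rw [floor_div_eq_floor_div_ediv hℓ, (mem_halfOpenCube side_pos).1 hp, valleyIndex_ediv]
    exact even_two_mul _
  · rintro ⟨hx, heven⟩
    have index_exists (i : Fin d) : ∃ q : Fin m × Fin ℓ, valleyIndex q = ⌊x i / (ε / ℓ)⌋ := by
      have hxi := hx i (Set.mem_univ i)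
      refine exists_valleyIndex_eq (Int.floor_nonneg.2 (div_nonneg hxi.1 side_pos.le)) ?_
        (floor_div_eq_floor_div_ediv hℓ (x i) ▸ heven i)
      rw [Int.floor_lt, div_lt_iff₀ side_pos]
      calc x i < 2 * ε * m := hxi.2.trans_eq hm.symm
        _ = ((2 * m * ℓ : ℤ) : ℝ) * (ε / ℓ) := by push_cast; field_simp
    choose p hp using index_exists
    exact ⟨p, (mem_halfOpenCube side_pos).2 fun i => (hp i).symm⟩

open scoped Classical in
/-- The periodic checkerboard potential: `α` on the grid cells of side `ε` all of whose indices
are even (the valleys), `β` elsewhere. -/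
def checkerboard (ε α β : ℝ) (x : Fin d → ℝ) : ℝ := if ∀ i, Even ⌊x i / ε⌋ then α else β

lemma checkerboard_of_mem_valleyCube (hε : 0 < ε) (hm : 2 * ε * m = 1) (hℓ : 0 < ℓ)
    {p : Fin d → Fin m × Fin ℓ} {x : Fin d → ℝ} (hx : x ∈ valleyCube ε p) :
    checkerboard ε α β x = α :=
  if_pos ((iUnion_valleyCube d hε hm hℓ).subset (Set.mem_iUnion_of_mem p hx)).2

lemma checkerboard_of_notMem_iUnion_valleyCube (hε : 0 < ε) (hm : 2 * ε * m = 1) (hℓ : 0 < ℓ)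
    {x : Fin d → ℝ} (hx : x ∈ unitCell d \ ⋃ p : Fin d → Fin m × Fin ℓ, valleyCube ε p) :
    checkerboard ε α β x = β :=
  if_neg fun h => hx.2 ((iUnion_valleyCube d hε hm hℓ).superset ⟨hx.1, h⟩)

lemma checkerboard_nonneg (hα : 0 ≤ α) (hβ : 0 ≤ β) (x : Fin d → ℝ) :
    0 ≤ checkerboard ε α β x := by
  rw [checkerboard]
  split_ifs
  exacts [hα, hβ]

lemma measurable_checkerboard (d : ℕ) (ε α β : ℝ) :
    Measurable (checkerboard ε α β : (Fin d → ℝ) → ℝ) := by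
  refine Measurable.ite ?_ measurable_const measurable_const
  rw [Set.ofPred_forall]
  refine MeasurableSet.iInter fun i => ?_
  have : Measurable fun x : Fin d → ℝ => ⌊x i / ε⌋ := by fun_prop
  exact this (t := {n | Even n}) MeasurableSpace.measurableSet_top

lemma integrableOn_checkerboard (d : ℕ) (ε α β : ℝ) :
    IntegrableOn (checkerboard ε α β) (unitCell d) := by
  refine Measure.integrableOn_of_bounded (M := max |α| |β|)
    (isBounded_unitCell d).measure_lt_top.ne
    (measurable_checkerboard d ε α β).aestronglyMeasurable (.of_forall fun x => ?_)
  rw [checkerboard, Real.norm_eq_abs]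
  split_ifs
  exacts [le_max_left _ _, le_max_right _ _]

lemma mem_rayleighBounds_checkerboard (hε : 0 < ε) (hm : 2 * ε * m = 1) (hα : 0 ≤ α) (hℓ : 0 < ℓ)
    (hn : n ≤ (m * ℓ) ^ d) :
    4 * 2 ^ d * (d * (2 * ℓ / ε) ^ 2 + α) ∈ rayleighBounds d (checkerboard ε α β) n := by
  obtain ⟨p⟩ : Nonempty (Fin n ↪ (Fin d → Fin m × Fin ℓ)) :=
    Function.Embedding.nonempty_of_card_le (by simpa using hn)
  set r : ℝ := ε / ℓ / 2 with hr
  have r_pos : 0 < r := by positivity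
  let c (a : Fin n) (i : Fin d) : ℝ := (valleyIndex (p a i) + 1 / 2) * (ε / ℓ)
  have ball_subset (a : Fin n) : Metric.ball (c a) r ⊆ valleyCube ε (p a) :=
    ball_subset_halfOpenCube _ _
  have center_mem (a : Fin n) (i : Fin d) : c a i ∈ Set.Icc r (1 - r) := by
    have index_nonneg : (0 : ℝ) ≤ valleyIndex (p a i) := by
      exact_mod_cast valleyIndex_nonneg (p a i)
    have := mul_nonneg index_nonneg (by positivity : 0 ≤ ε / ℓ)
    have := valleyIndex_add_one_mul_le hε hm (p a i)
    constructor <;> simp only [c, hr] <;> linarith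
  have inv_r : r⁻¹ = 2 * ℓ / ε := by rw [hr]; field_simp
  rw [← inv_r, ← Fintype.card_fin n]
  refine mem_rayleighBounds_card (φ := fun a => bump r (c a))
    (fun a => bump_mem_periodicLipschitz r_pos.le (c a)) (fun a b hab => ?_)
    (fun a => bump_nonneg r (c a)) (fun a => bump_ne_zero r_pos (c a))
    (integrableOn_checkerboard d ε α β) fun a => ?_
  · exact bump_mul_bump_eq_zero r_pos (center_mem a) (center_mem b) <|
      (disjoint_valleyCube hε hℓ (p.injective.ne hab)).mono (ball_subset a) (ball_subset b)
  · exact energySq_bump_le_mul_l2sq (integrableOn_checkerboard d ε α β) hα r_pos (center_mem a)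
      fun x hx => (checkerboard_of_mem_valleyCube hε hm hℓ (ball_subset a hx)).le

lemma minmaxVal_checkerboard_le (hε : 0 < ε) (hm : 2 * ε * m = 1) (hα : 0 ≤ α) (hβ : 0 ≤ β)
    (hℓ : 0 < ℓ) (hn : 0 < n) (hn' : n ≤ (m * ℓ) ^ d) :
    minmaxVal d (checkerboard ε α β) n ≤ 4 * 2 ^ d * (d * (2 * ℓ / ε) ^ 2 + α) := by
  rw [minmaxVal_eq_sInf]
  exact csInf_le ⟨0, fun _ => nonneg_of_mem_rayleighBounds (integrableOn_checkerboard d ε α β)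
    (checkerboard_nonneg hα hβ) hn⟩ (mem_rayleighBounds_checkerboard hε hm hα hℓ hn')

lemma le_of_mem_rayleighBounds_checkerboard (hε : 0 < ε) (hm : 2 * ε * m = 1) (hα : 0 ≤ α)
    (hℓ : 0 < ℓ) (hS : 0 ≤ S) (hSβ : S ≤ β) (hSℓ : S * (2 ^ d * d * (ε / ℓ) ^ 2) ≤ 1)
    (hn : (m * ℓ) ^ d < n) {M : ℝ} (hM : M ∈ rayleighBounds d (checkerboard ε α β) n) :
    S ≤ M := by
  refine le_of_mem_rayleighBounds (integrableOn_checkerboard d ε α β)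
    (checkerboard_nonneg hα (hS.trans hSβ)) (Q := fun p : Fin d → Fin m × Fin ℓ => valleyCube ε p)
    (fun p => measurableSet_halfOpenCube _ _) (fun p p' => disjoint_valleyCube hε hℓ)
    (valleyCube_subset_unitCell hε hm) (fun x hx => ?_) (fun p v hv h0 => ?_) (by simpa using hn) hM
  · exact hSβ.trans_eq (checkerboard_of_notMem_iUnion_valleyCube hε hm hℓ hx).symm
  · obtain ⟨-, K, hK⟩ := hv
    have grad_nonneg : 0 ≤ ∫ x in valleyCube ε p, gradSq v x :=
      integral_nonneg fun x => gradSq_nonneg v x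
    calc S * ∫ x in valleyCube ε p, v x ^ 2
        ≤ S * (2 ^ d * d * (ε / ℓ) ^ 2 * ∫ x in valleyCube ε p, gradSq v x) := by
          gcongr
          exact poincare_inequality_halfOpenCube (by positivity) hK h0
      _ = S * (2 ^ d * d * (ε / ℓ) ^ 2) * ∫ x in valleyCube ε p, gradSq v x := by ring
      _ ≤ ∫ x in valleyCube ε p, gradSq v x := mul_le_of_le_one_left grad_nonneg hSℓ

lemma le_minmaxVal_checkerboard (hd : 1 ≤ d) (hε : 0 < ε) (hm : 2 * ε * m = 1) (hα : 0 ≤ α)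
    (hℓ : 0 < ℓ) (hS : 0 ≤ S) (hSβ : S ≤ β)
    (hSℓ : S * (2 ^ d * d * (ε / ℓ) ^ 2) ≤ 1) :
    S ≤ minmaxVal d (checkerboard ε α β) (m ^ d * ℓ ^ d + 1) := by
  have m_pos : 0 < m := Nat.pos_of_ne_zero fun h => by simp [h] at hm
  have card_le : m ^ d * ℓ ^ d + 1 ≤ (m * (ℓ + 1)) ^ d := by
    rw [← mul_pow]
    exact Nat.pow_lt_pow_left (by gcongr; omega) (by omega)
  rw [minmaxVal_eq_sInf]
  exact le_csInf ⟨_, mem_rayleighBounds_checkerboard hε hm hα ℓ.succ_pos card_le⟩ fun M =>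
    le_of_mem_rayleighBounds_checkerboard hε hm hα hℓ hS hSβ hSℓ (by rw [mul_pow]; omega)

end Checkerboard

theorem statement17_general {d : ℕ} (hd : 1 ≤ d) {ε α β c_α : ℝ} {m n k ℓ : ℕ} (hε : 0 < ε)
    (hm : 2 * ε * m = 1) (hα : 0 ≤ α) (hα' : α ≤ c_α / ε ^ 2) (hn : 1 ≤ n)
    (hnk : n ≤ m ^ d * k ^ d) (hℓ : 2 ≤ ℓ)
    (hβ : (2 ^ d * (d : ℝ))⁻¹ * ((ℓ : ℝ) - 1) ^ 2 / ε ^ 2 ≤ β) :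
    minmaxVal d (checkerboard ε α β) n / minmaxVal d (checkerboard ε α β) (m ^ d * ℓ ^ d + 1) ≤
      4 * 2 ^ d * (4 * d + c_α) * (2 ^ d * d) * k ^ 2 / ((ℓ : ℝ) - 1) ^ 2 := by
  have hd' : (0 : ℝ) < d := by exact_mod_cast hd
  have hc_α : 0 ≤ c_α := ((le_div_iff₀ (pow_pos hε 2)).1 hα').trans' (by positivity)
  have hk : 0 < k := Nat.pos_of_ne_zero fun h => by
    rw [h, zero_pow (by omega), mul_zero] at hnk
    omega
  have hℓ' : (0 : ℝ) < (ℓ : ℝ) - 1 := sub_pos.2 (by exact_mod_cast hℓ)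
  set S : ℝ := (2 ^ d * (d : ℝ))⁻¹ * ((ℓ : ℝ) - 1) ^ 2 / ε ^ 2
  have hS : 0 < S := by positivity
  have numerator_le : minmaxVal d (checkerboard ε α β) n ≤
      4 * 2 ^ d * (4 * d + c_α) * (k / ε) ^ 2 := by
    have one_le : (1 : ℝ) ≤ (k : ℝ) ^ 2 := one_le_pow₀ (by exact_mod_cast hk)
    calc minmaxVal d (checkerboard ε α β) n ≤ 4 * 2 ^ d * (d * (2 * k / ε) ^ 2 + α) :=
          minmaxVal_checkerboard_le hε hm hα (hS.le.trans hβ) hk hn (by rwa [mul_pow])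
      _ ≤ 4 * 2 ^ d * (d * (2 * k / ε) ^ 2 + c_α / ε ^ 2 * k ^ 2) := by
          gcongr
          exact hα'.trans (le_mul_of_one_le_right (by positivity) one_le)
      _ = 4 * 2 ^ d * (4 * d + c_α) * (k / ε) ^ 2 := by ring
  have le_denominator : S ≤ minmaxVal d (checkerboard ε α β) (m ^ d * ℓ ^ d + 1) := by
    refine le_minmaxVal_checkerboard hd hε hm hα (by omega) hS.le hβ ?_
    calc S * (2 ^ d * d * (ε / ℓ) ^ 2) = (((ℓ : ℝ) - 1) / ℓ) ^ 2 := by simp only [S]; field_simp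
      _ ≤ 1 := pow_le_one₀ (by positivity) (div_le_one_of_le₀ (by linarith) (by positivity))
  refine (div_le_div₀ (by positivity) numerator_le hS le_denominator).trans_eq ?_
  simp only [S]
  field_simp

open scoped Classical in
/-- Corollary 5.4 of the paper: spectral-gap estimate for the periodic
checkerboard potential (`1/(2ε) = m ∈ ℕ`, `V(x) = α` iff `⌊xᵢ/ε⌋` is even for all `i`,
`N = (2ε)^{-d} = m^d`), assuming moreover `α ≤ c_α ε⁻²`. There are constants `c'`
(depending only on `d`) and `C` (depending only on `d` and `c_α`) such that for all
integers `ℓ > k ≥ 1` with `β ≥ c'(ℓ-1)²ε⁻²` one has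
`μ_{Nk}/μ_{Nℓ^d+1} ≤ C k²/(ℓ-1)²`; in particular `μ₁/μ_{Nℓ^d+1} ≤ C (ℓ-1)⁻²`. -/
theorem statement17 (d : ℕ) (hd : 1 ≤ d) :
    ∃ c' : ℝ, 0 < c' ∧ ∀ c_α : ℝ, 0 < c_α → ∃ C : ℝ, 0 < C ∧
      ∀ (ε α β : ℝ) (V : (Fin d → ℝ) → ℝ) (m : ℕ),
        0 < ε → 0 < m → 2 * ε * (m : ℝ) = 1 →
        0 ≤ α → α ≤ β →
        (∀ x : Fin d → ℝ, V x = if ∀ i, Even ⌊x i / ε⌋ then α else β) →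
        α ≤ c_α / ε ^ 2 →
        ∀ k ℓ : ℕ, 1 ≤ k → k < ℓ → c' * ((ℓ : ℝ) - 1) ^ 2 / ε ^ 2 ≤ β →
          minmaxVal d V (m ^ d * k) / minmaxVal d V (m ^ d * ℓ ^ d + 1) ≤
              C * (k : ℝ) ^ 2 / ((ℓ : ℝ) - 1) ^ 2 ∧
            minmaxVal d V 1 / minmaxVal d V (m ^ d * ℓ ^ d + 1) ≤
              C * (((ℓ : ℝ) - 1) ^ 2)⁻¹ := by
  have : (0 : ℝ) < d := by exact_mod_cast hd
  refine ⟨(2 ^ d * d)⁻¹, by positivity, fun c_α hc_α =>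
    ⟨4 * 2 ^ d * (4 * d + c_α) * (2 ^ d * d), by positivity, ?_⟩⟩
  intro ε α β V m hε hm0 hm hα _ hV hα' k ℓ hk hkℓ hβ
  obtain rfl : V = checkerboard ε α β := funext hV
  have m_pow_pos : 0 < m ^ d := pow_pos hm0 d
  constructor
  · exact statement17_general hd hε hm hα hα' (Nat.mul_pos m_pow_pos hk)
      (Nat.mul_le_mul_left _ (Nat.le_self_pow (by omega) k)) (by omega) hβ
  · have n_le : 1 ≤ m ^ d * 1 ^ d := by rwa [one_pow, mul_one]
    simpa [div_eq_mul_inv] using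
      statement17_general hd hε hm hα hα' le_rfl n_le (by omega : 2 ≤ ℓ) hβ

end
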